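/- Suppose each A_k has full column rank with λ_min(A_k^T A_k) ≥ σ_k² for constants σ_k > 0, and let σ_min := min_k σ_k. Then for every r ≥ 0 the cyclic exact BCD iterates satisfy Δ^{(r+1)} ≤ 3 · max{ Δ^{(0)}, 2 R_0² · (1/σ_min²) · log²(2NK) · (L² + L_max²) } / (r+1), where Δ^{(r)} := f(x^{(r)}) − f*. -/

import Mathlib

open Finset

/-- Squared Euclidean norm of a vector in `ℝ^n`. -/
noncomputable def sqnorm {n : ℕ} (v : Fin n → ℝ) : ℝ := ∑ i, v i ^ 2

/-- Euclidean inner product on `ℝ^n`. -/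
noncomputable def dotp {n : ℕ} (u v : Fin n → ℝ) : ℝ := ∑ i, u i * v i

/-- `λ_max(AᵀA)` for a real matrix `A`, characterized as the maximum of `‖Av‖²`
over unit vectors `v`. -/
noncomputable def lamMaxQ {M N : ℕ} (A : Matrix (Fin M) (Fin N) ℝ) : ℝ :=
  sSup {r : ℝ | ∃ v : Fin N → ℝ, sqnorm v = 1 ∧ r = sqnorm (A.mulVec v)}

/-- `λ_min(AᵀA)` for a real matrix `A`, characterized as the minimum of `‖Av‖²`
over unit vectors `v`. -/
noncomputable def lamMinQ {M N : ℕ} (A : Matrix (Fin M) (Fin N) ℝ) : ℝ :=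
  sInf {r : ℝ | ∃ v : Fin N → ℝ, sqnorm v = 1 ∧ r = sqnorm (A.mulVec v)}

/-- `λ_max(AᵀA)` for the concatenated matrix `A = [A_1 ⋯ A_K]`, acting on block
vectors. -/
noncomputable def lamMaxBlock {K M N : ℕ} (A : Fin K → Matrix (Fin M) (Fin N) ℝ) : ℝ :=
  sSup {r : ℝ | ∃ v : Fin K → Fin N → ℝ, (∑ k, sqnorm (v k)) = 1 ∧
    r = sqnorm (∑ k, (A k).mulVec (v k))}

/-- Maximum of a finite family of reals indexed by `Fin K`, `K ≥ 1`. -/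
noncomputable def maxOf {K : ℕ} (hK : 1 ≤ K) (P : Fin K → ℝ) : ℝ :=
  Finset.univ.sup' (Finset.univ_nonempty_iff.mpr ⟨⟨0, hK⟩⟩) P

/-- Minimum of a finite family of reals indexed by `Fin K`, `K ≥ 1`. -/
noncomputable def minOf {K : ℕ} (hK : 1 ≤ K) (P : Fin K → ℝ) : ℝ :=
  Finset.univ.inf' (Finset.univ_nonempty_iff.mpr ⟨⟨0, hK⟩⟩) P

/-- The residual `Σ_k A_k x_k − b`. -/
noncomputable def resid {K M N : ℕ} (A : Fin K → Matrix (Fin M) (Fin N) ℝ)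
    (b : Fin M → ℝ) (x : Fin K → Fin N → ℝ) : Fin M → ℝ :=
  (∑ k, (A k).mulVec (x k)) - b

/-- The smooth part `g(x) = (1/2)‖Σ_k A_k x_k − b‖²`. -/
noncomputable def gq {K M N : ℕ} (A : Fin K → Matrix (Fin M) (Fin N) ℝ)
    (b : Fin M → ℝ) (x : Fin K → Fin N → ℝ) : ℝ :=
  (1 / 2) * sqnorm (resid A b x)

/-- The objective `f(x) = g(x) + Σ_k h_k(x_k)`. -/
noncomputable def fq {K M N : ℕ} (A : Fin K → Matrix (Fin M) (Fin N) ℝ)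
    (b : Fin M → ℝ) (h : Fin K → (Fin N → ℝ) → ℝ) (x : Fin K → Fin N → ℝ) : ℝ :=
  gq A b x + ∑ k, h k (x k)

/-- The partial gradient `∇_k g(x) = A_kᵀ (Σ_j A_j x_j − b)`. -/
noncomputable def gradk {K M N : ℕ} (A : Fin K → Matrix (Fin M) (Fin N) ℝ)
    (b : Fin M → ℝ) (x : Fin K → Fin N → ℝ) (k : Fin K) : Fin N → ℝ :=
  ((A k).transpose).mulVec (resid A b x)

/-- The intermediate point `w_k^{(r+1)}` of the cycle: blocks `j < k` come from
`x^{(r+1)} = xp`, the remaining blocks from `x^{(r)} = x`. -/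
def wpt {K N : ℕ} (x xp : Fin K → Fin N → ℝ) (k : Fin K) : Fin K → Fin N → ℝ :=
  fun j => if j < k then xp j else x j

/-- The objective of the `k`-th BCPG prox subproblem at the point
`w_k^{(r+1)} = wpt x xp k`, evaluated at candidate block `y`. -/
noncomputable def bcpgObj {K M N : ℕ} (A : Fin K → Matrix (Fin M) (Fin N) ℝ)
    (b : Fin M → ℝ) (h : Fin K → (Fin N → ℝ) → ℝ) (P : Fin K → ℝ)
    (x xp : Fin K → Fin N → ℝ) (k : Fin K) (y : Fin N → ℝ) : ℝ :=
  dotp (gradk A b (wpt x xp k) k) (y - x k) + (P k / 2) * sqnorm (y - x k) + h k y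

/-- One cycle of cyclic BCPG: `xp = x^{(r+1)}` is obtained from `x = x^{(r)}`
by letting, for `k = 1,…,K`, the `k`-th block minimize the prox subproblem at
`w_k^{(r+1)}` over `X_k`. -/
def BCPGStep {K M N : ℕ} (A : Fin K → Matrix (Fin M) (Fin N) ℝ)
    (b : Fin M → ℝ) (h : Fin K → (Fin N → ℝ) → ℝ)
    (X : Fin K → Set (Fin N → ℝ)) (P : Fin K → ℝ)
    (x xp : Fin K → Fin N → ℝ) : Prop :=
  ∀ k : Fin K, xp k ∈ X k ∧ ∀ y ∈ X k,
    bcpgObj A b h P x xp k (xp k) ≤ bcpgObj A b h P x xp k y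

/-- One cycle of cyclic exact BCD: `xp = x^{(r+1)}` is obtained from
`x = x^{(r)}` by letting, for `k = 1,…,K`, the `k`-th block minimize
`f(x_1^{(r+1)},…,x_{k−1}^{(r+1)}, ·, x_{k+1}^{(r)},…,x_K^{(r)})` over `X_k`. -/
def BCDStep {K M N : ℕ} (A : Fin K → Matrix (Fin M) (Fin N) ℝ)
    (b : Fin M → ℝ) (h : Fin K → (Fin N → ℝ) → ℝ)
    (X : Fin K → Set (Fin N → ℝ))
    (x xp : Fin K → Fin N → ℝ) : Prop :=
  ∀ k : Fin K, xp k ∈ X k ∧ ∀ y ∈ X k,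
    fq A b h (Function.update (wpt x xp k) k (xp k)) ≤
      fq A b h (Function.update (wpt x xp k) k y)

open Matrix in
lemma sqnorm_eq {n : ℕ} (v : Fin n → ℝ) : sqnorm v = v ⬝ᵥ v := by
  simp [sqnorm, dotProduct, pow_two]

lemma sqnorm_nonneg' {n : ℕ} (v : Fin n → ℝ) : 0 ≤ sqnorm v :=
  Finset.sum_nonneg fun _ _ => sq_nonneg _

lemma sqnorm_smul' {n : ℕ} (c : ℝ) (v : Fin n → ℝ) : sqnorm (c • v) = c ^ 2 * sqnorm v := by
  simp [sqnorm, Finset.mul_sum, mul_pow]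

open Matrix in
lemma sqnorm_add' {n : ℕ} (u v : Fin n → ℝ) :
    sqnorm (u + v) = sqnorm u + 2 * (u ⬝ᵥ v) + sqnorm v := by
  simp only [sqnorm_eq, add_dotProduct, dotProduct_add]
  rw [dotProduct_comm v u]; ring

open Matrix in
lemma sqnorm_sub' {n : ℕ} (u v : Fin n → ℝ) :
    sqnorm (u - v) = sqnorm u - 2 * (u ⬝ᵥ v) + sqnorm v := by
  simp only [sqnorm_eq, sub_dotProduct, dotProduct_sub]
  rw [dotProduct_comm v u]; ring

lemma lamMin_bound {M N : ℕ} (A : Matrix (Fin M) (Fin N) ℝ) (v : Fin N → ℝ) :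
    lamMinQ A * sqnorm v ≤ sqnorm (A.mulVec v) := by
  rcases eq_or_lt_of_le (sqnorm_nonneg' v) with h0 | hpos
  · rw [← h0, mul_zero]; exact sqnorm_nonneg' _
  · have hsq : Real.sqrt (sqnorm v) ^ 2 = sqnorm v := Real.sq_sqrt hpos.le
    have key : lamMinQ A ≤ sqnorm (A.mulVec ((Real.sqrt (sqnorm v))⁻¹ • v)) := by
      apply csInf_le
      · exact ⟨0, by rintro r ⟨w, -, rfl⟩; exact sqnorm_nonneg' _⟩
      · refine ⟨_, ?_, rfl⟩
        rw [sqnorm_smul', inv_pow, hsq, inv_mul_cancel₀ hpos.ne']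
    rw [Matrix.mulVec_smul, sqnorm_smul', inv_pow, hsq] at key
    calc lamMinQ A * sqnorm v ≤ ((sqnorm v)⁻¹ * sqnorm (A.mulVec v)) * sqnorm v :=
          mul_le_mul_of_nonneg_right key hpos.le
      _ = sqnorm (A.mulVec v) := by field_simp

lemma block_crude {K M N : ℕ} (A : Fin K → Matrix (Fin M) (Fin N) ℝ) (v : Fin K → Fin N → ℝ) :
    sqnorm (∑ k, (A k).mulVec (v k)) ≤
      (∑ i, ∑ p : Fin K × Fin N, (A p.1 i p.2) ^ 2) * ∑ k, sqnorm (v k) := by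
  have e : ∑ k, sqnorm (v k) = ∑ p : Fin K × Fin N, (v p.1 p.2) ^ 2 := by
    rw [Fintype.sum_prod_type]; rfl
  rw [e, Finset.sum_mul]
  unfold sqnorm
  apply Finset.sum_le_sum
  intro i _
  have : (∑ k, (A k).mulVec (v k)) i = ∑ p : Fin K × Fin N, A p.1 i p.2 * v p.1 p.2 := by
    rw [Fintype.sum_prod_type, Finset.sum_apply]; rfl
  rw [this]
  exact Finset.sum_mul_sq_le_sq_mul_sq _ _ _

lemma lamMaxBlock_nonneg {K M N : ℕ} (A : Fin K → Matrix (Fin M) (Fin N) ℝ) :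
    0 ≤ lamMaxBlock A := by
  apply Real.sSup_nonneg
  rintro r ⟨w, -, rfl⟩; exact sqnorm_nonneg' _

lemma lamMaxBlock_bound {K M N : ℕ} (A : Fin K → Matrix (Fin M) (Fin N) ℝ)
    (v : Fin K → Fin N → ℝ) :
    sqnorm (∑ k, (A k).mulVec (v k)) ≤ lamMaxBlock A * ∑ k, sqnorm (v k) := by
  have hnn : 0 ≤ ∑ k, sqnorm (v k) := Finset.sum_nonneg fun _ _ => sqnorm_nonneg' _
  rcases eq_or_lt_of_le hnn with h0 | hpos
  · have := block_crude A v
    rw [← h0] at this ⊢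
    simpa using this
  · set s := ∑ k, sqnorm (v k) with hsdef
    have hsq : Real.sqrt s ^ 2 = s := Real.sq_sqrt hpos.le
    have key : sqnorm (∑ k, (A k).mulVec ((Real.sqrt s)⁻¹ • v k)) ≤ lamMaxBlock A := by
      apply le_csSup
      · refine ⟨∑ i, ∑ p : Fin K × Fin N, (A p.1 i p.2) ^ 2, ?_⟩
        rintro r ⟨w, hw, rfl⟩
        have := block_crude A w
        rwa [hw, mul_one] at this
      · refine ⟨fun k => (Real.sqrt s)⁻¹ • v k, ?_, rfl⟩
        simp only [sqnorm_smul']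
        rw [← Finset.mul_sum, inv_pow, hsq, ← hsdef, inv_mul_cancel₀ hpos.ne']
    simp only [Matrix.mulVec_smul] at key
    rw [← Finset.smul_sum, sqnorm_smul', inv_pow, hsq] at key
    calc sqnorm (∑ k, (A k).mulVec (v k))
        = (s⁻¹ * sqnorm (∑ k, (A k).mulVec (v k))) * s := by field_simp
      _ ≤ _ := mul_le_mul_of_nonneg_right key hpos.le

lemma tri_bound {K : ℕ} (B : Fin K → Fin K → ℝ) (α β : Fin K → ℝ) (c : ℝ) (hc : 0 ≤ c)
    (hα : ∀ k, 0 ≤ α k) (hβ : ∀ k, 0 ≤ β k)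
    (hB : ∀ S T : Finset (Fin K), Disjoint S T →
      ∑ i ∈ S, ∑ j ∈ T, B i j ≤ c * (∑ i ∈ S, α i + ∑ j ∈ T, β j)) (m : ℕ) :
    ∀ (a : ℕ) (S : Finset (Fin K)), (∀ k ∈ S, a ≤ k.val ∧ k.val < a + 2 ^ m) →
      ∑ i ∈ S, ∑ j ∈ S, (if i < j then B i j else 0) ≤
        (m * c) * (∑ i ∈ S, α i + ∑ i ∈ S, β i) := by
  induction m with
  | zero =>
    intro a S hS
    simp only [Nat.cast_zero, zero_mul]
    apply le_of_eq
    apply Finset.sum_eq_zero; intro i hi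
    apply Finset.sum_eq_zero; intro j hj
    rw [if_neg]
    have h1 := hS i hi
    have h2 := hS j hj
    simp only [pow_zero] at h1 h2
    rw [Fin.lt_def]; omega
  | succ m ih =>
    intro a S hS
    set S1 := S.filter (fun k => k.val < a + 2 ^ m) with hS1
    set S2 := S.filter (fun k => ¬ k.val < a + 2 ^ m) with hS2
    have split : ∀ F : Fin K → ℝ, ∑ i ∈ S, F i = ∑ i ∈ S1, F i + ∑ i ∈ S2, F i := fun F =>
      (Finset.sum_filter_add_sum_filter_not S _ F).symm
    have hdis : Disjoint S1 S2 := Finset.disjoint_filter_filter_not _ _ _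
    have i1 := ih a S1 (by
      intro k hk; rw [hS1, Finset.mem_filter] at hk
      exact ⟨(hS k hk.1).1, hk.2⟩)
    have i2 := ih (a + 2 ^ m) S2 (by
      intro k hk; rw [hS2, Finset.mem_filter] at hk
      have := (hS k hk.1).2
      rw [pow_succ] at this
      constructor <;> omega)
    have i12 : ∑ i ∈ S1, ∑ j ∈ S2, (if i < j then B i j else 0) = ∑ i ∈ S1, ∑ j ∈ S2, B i j := by
      apply Finset.sum_congr rfl; intro i hi
      apply Finset.sum_congr rfl; intro j hj
      rw [hS1, Finset.mem_filter] at hi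
      rw [hS2, Finset.mem_filter] at hj
      rw [if_pos]
      rw [Fin.lt_def]; omega
    have i21 : ∑ i ∈ S2, ∑ j ∈ S1, (if i < j then B i j else 0) = 0 := by
      apply Finset.sum_eq_zero; intro i hi
      apply Finset.sum_eq_zero; intro j hj
      rw [hS2, Finset.mem_filter] at hi
      rw [hS1, Finset.mem_filter] at hj
      rw [if_neg]
      rw [Fin.lt_def]; omega
    have hb := hB S1 S2 hdis
    have e : ∑ i ∈ S, ∑ j ∈ S, (if i < j then B i j else 0) =
        ∑ i ∈ S1, ∑ j ∈ S1, (if i < j then B i j else 0) +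
        ∑ i ∈ S1, ∑ j ∈ S2, (if i < j then B i j else 0) +
        (∑ i ∈ S2, ∑ j ∈ S1, (if i < j then B i j else 0) +
        ∑ i ∈ S2, ∑ j ∈ S2, (if i < j then B i j else 0)) := by
      rw [split]
      rw [← Finset.sum_add_distrib, ← Finset.sum_add_distrib]
      congr 1 <;> exact Finset.sum_congr rfl fun i _ => split _
    rw [e, i12, i21, split α, split β]
    have n1 : 0 ≤ c * ∑ i ∈ S2, α i := mul_nonneg hc (Finset.sum_nonneg fun _ _ => hα _)
    have n2 : 0 ≤ c * ∑ i ∈ S1, β i := mul_nonneg hc (Finset.sum_nonneg fun _ _ => hβ _)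
    push_cast
    linarith

open Matrix in
lemma cross_bound {K M N : ℕ} (A : Fin K → Matrix (Fin M) (Fin N) ℝ)
    (u d : Fin K → Fin N → ℝ) (S T : Finset (Fin K)) (hST : Disjoint S T) :
    ∑ i ∈ S, ∑ j ∈ T, ((A i).mulVec (u i) ⬝ᵥ (A j).mulVec (d j)) ≤
      (lamMaxBlock A / 4) * (∑ i ∈ S, sqnorm (u i) + ∑ j ∈ T, sqnorm (d j)) := by
  have e1 : ∑ i ∈ S, ∑ j ∈ T, ((A i).mulVec (u i) ⬝ᵥ (A j).mulVec (d j)) =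
      (∑ i ∈ S, (A i).mulVec (u i)) ⬝ᵥ (∑ j ∈ T, (A j).mulVec (d j)) := by
    rw [sum_dotProduct]
    apply Finset.sum_congr rfl; intro i _
    rw [dotProduct_sum]
  set v : Fin K → Fin N → ℝ := fun k => (if k ∈ S then u k else 0) + (if k ∈ T then d k else 0)
    with hv
  have hA : ∑ k, (A k).mulVec (v k) =
      ∑ i ∈ S, (A i).mulVec (u i) + ∑ j ∈ T, (A j).mulVec (d j) := by
    simp only [hv, Matrix.mulVec_add, Finset.sum_add_distrib]
    have : ∀ (k : Fin K) (P : Prop) [Decidable P] (w : Fin N → ℝ),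
        (A k).mulVec (if P then w else 0) = if P then (A k).mulVec w else 0 := by
      intro k P _ w; split_ifs <;> simp
    simp only [this, Finset.sum_ite_mem, Finset.univ_inter]
  have hn : ∑ k, sqnorm (v k) = ∑ i ∈ S, sqnorm (u i) + ∑ j ∈ T, sqnorm (d j) := by
    have : ∀ k, sqnorm (v k) = (if k ∈ S then sqnorm (u k) else 0) +
        (if k ∈ T then sqnorm (d k) else 0) := by
      intro k
      by_cases h1 : k ∈ S
      · have h2 : k ∉ T := Finset.disjoint_left.mp hST h1
        simp [hv, h1, h2]
      · by_cases h2 : k ∈ T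
        · simp [hv, h1, h2]
        · simp [hv, h1, h2, sqnorm]
    simp only [this, Finset.sum_add_distrib, Finset.sum_ite_mem, Finset.univ_inter]
  have hb := lamMaxBlock_bound A v
  rw [hA, hn] at hb
  rw [e1]
  set p := ∑ i ∈ S, (A i).mulVec (u i)
  set q := ∑ j ∈ T, (A j).mulVec (d j)
  have h1 := sqnorm_add' p q
  have h2 := sqnorm_sub' p q
  have h3 := sqnorm_nonneg' (p - q)
  linarith

open Matrix in
lemma upper_bound {K M N : ℕ} (A : Fin K → Matrix (Fin M) (Fin N) ℝ)
    (u d : Fin K → Fin N → ℝ) (m : ℕ) (hm : K ≤ 2 ^ m) :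
    (∑ i, ∑ j, (if i < j then (A i).mulVec (u i) ⬝ᵥ (A j).mulVec (d j) else 0)) ^ 2 ≤
      (m / 2 * lamMaxBlock A) ^ 2 * ((∑ k, sqnorm (u k)) * ∑ k, sqnorm (d k)) := by
  have hL := lamMaxBlock_nonneg A
  have key : ∀ t : ℝ,
      t * (∑ i, ∑ j, (if i < j then (A i).mulVec (u i) ⬝ᵥ (A j).mulVec (d j) else 0)) ≤
      (m * (lamMaxBlock A / 4)) * (t ^ 2 * (∑ k, sqnorm (u k)) + ∑ k, sqnorm (d k)) := by
    intro t
    have := tri_bound (fun i j => (A i).mulVec (t • u i) ⬝ᵥ (A j).mulVec (d j))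
      (fun k => sqnorm (t • u k)) (fun k => sqnorm (d k)) (lamMaxBlock A / 4) (by linarith)
      (fun _ => sqnorm_nonneg' _) (fun _ => sqnorm_nonneg' _)
      (fun S T h => cross_bound A (fun k => t • u k) d S T h) m 0 Finset.univ
      (fun k _ => ⟨Nat.zero_le _, by have := k.isLt; omega⟩)
    simp only [sqnorm_smul', ← Finset.mul_sum] at this
    refine le_trans (le_of_eq ?_) this
    rw [Finset.mul_sum]
    apply Finset.sum_congr rfl; intro i _
    rw [Finset.mul_sum]
    apply Finset.sum_congr rfl; intro j _
    rw [Matrix.mulVec_smul, smul_dotProduct, smul_eq_mul]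
    split_ifs <;> simp
  set S := (∑ i, ∑ j, (if i < j then (A i).mulVec (u i) ⬝ᵥ (A j).mulVec (d j) else 0))
  set a := ∑ k, sqnorm (u k)
  set e := ∑ k, sqnorm (d k)
  have hd := discrim_le_zero (a := m * (lamMaxBlock A / 4) * a) (b := -S)
    (c := m * (lamMaxBlock A / 4) * e) (by intro t; have := key t; linarith)
  unfold discrim at hd
  linarith

lemma scalar_lim (p q : ℝ) (h : ∀ t : ℝ, 0 < t → t ≤ 1 → 0 ≤ t * p + t ^ 2 * q) : 0 ≤ p := by
  by_contra hp
  push Not at hp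
  have hq : 0 < |q| + 1 := by positivity
  have hle := le_abs_self q
  have h1 : 0 < -p / (|q| + 1 - p) := div_pos (by linarith) (by linarith)
  have h2 : -p / (|q| + 1 - p) ≤ 1 := by rw [div_le_one (by linarith)]; linarith
  have h3 := h _ h1 h2
  set t := -p / (|q| + 1 - p) with ht
  have h4 : t * (|q| + 1 - p) = -p := by rw [ht]; exact div_mul_cancel₀ _ (by linarith)
  have h5 : 0 ≤ t * (p + t * q) := by linarith [h3]
  have h6 : 0 ≤ p + t * q := nonneg_of_mul_nonneg_right h5 h1
  have h7 : t * q ≤ t * |q| := mul_le_mul_of_nonneg_left hle h1.le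
  nlinarith

lemma resid_update {K M N : ℕ} (A : Fin K → Matrix (Fin M) (Fin N) ℝ)
    (b : Fin M → ℝ) (w : Fin K → Fin N → ℝ) (k : Fin K) (y z : Fin N → ℝ) :
    resid A b (Function.update w k y) =
      resid A b (Function.update w k z) + (A k).mulVec (y - z) := by
  have : ∀ y, ∑ j, (A j).mulVec (Function.update w k y j) =
      (A k).mulVec y + ∑ j ∈ Finset.univ \ {k}, (A j).mulVec (w j) := by
    intro y
    rw [← Finset.sum_sdiff (Finset.subset_univ {k}), add_comm]
    congr 1
    · simp
    · apply Finset.sum_congr rfl; intro j hj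
      rw [Function.update_of_ne]; simpa using hj
  unfold resid
  rw [this, this, Matrix.mulVec_sub]; abel

open Matrix in
lemma fq_update {K M N : ℕ} (A : Fin K → Matrix (Fin M) (Fin N) ℝ)
    (b : Fin M → ℝ) (h : Fin K → (Fin N → ℝ) → ℝ) (w : Fin K → Fin N → ℝ) (k : Fin K)
    (y z : Fin N → ℝ) :
    fq A b h (Function.update w k y) - fq A b h (Function.update w k z) =
      resid A b (Function.update w k z) ⬝ᵥ (A k).mulVec (y - z) +
      (1 / 2) * sqnorm ((A k).mulVec (y - z)) + (h k y - h k z) := by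
  have : ∀ y, ∑ j, h j (Function.update w k y j) =
      h k y + ∑ j ∈ Finset.univ \ {k}, h j (w j) := by
    intro y
    rw [← Finset.sum_sdiff (Finset.subset_univ {k}), add_comm]
    congr 1
    · simp
    · apply Finset.sum_congr rfl; intro j hj
      rw [Function.update_of_ne]; simpa using hj
  unfold fq gq
  rw [this, this, resid_update A b w k y z, sqnorm_add']; ring

open Matrix in
/-- Variational inequality for the block subproblem. -/
lemma block_VI {K M N : ℕ} (A : Fin K → Matrix (Fin M) (Fin N) ℝ)
    (b : Fin M → ℝ) (h : Fin K → (Fin N → ℝ) → ℝ) (w : Fin K → Fin N → ℝ) (k : Fin K)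
    (X : Set (Fin N → ℝ)) (hX : Convex ℝ X) (hh : ConvexOn ℝ Set.univ (h k))
    (z : Fin N → ℝ) (hz : z ∈ X)
    (hopt : ∀ y ∈ X, fq A b h (Function.update w k z) ≤ fq A b h (Function.update w k y))
    (y : Fin N → ℝ) (hy : y ∈ X) :
    0 ≤ resid A b (Function.update w k z) ⬝ᵥ (A k).mulVec (y - z) + (h k y - h k z) := by
  apply scalar_lim _ ((1 / 2) * sqnorm ((A k).mulVec (y - z)))
  intro t ht0 ht1
  have hmem : (1 - t) • z + t • y ∈ X := hX hz hy (by linarith) ht0.le (by ring)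
  have h1 := hopt _ hmem
  have h2 := fq_update A b h w k ((1 - t) • z + t • y) z
  have h3 := hh.2 (Set.mem_univ z) (Set.mem_univ y) (by linarith : 0 ≤ 1 - t) ht0.le (by ring)
  have h4 : (1 - t) • z + t • y - z = t • (y - z) := by module
  rw [h4, Matrix.mulVec_smul, dotProduct_smul, sqnorm_smul'] at h2
  simp only [smul_eq_mul] at h2 h3
  nlinarith

lemma wpt_eq_update {K N : ℕ} (x xp : Fin K → Fin N → ℝ) (k : Fin K) :
    Function.update (wpt x xp k) k (xp k) =
      fun j => if j.val < k.val + 1 then xp j else x j := by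
  funext j
  by_cases hj : j = k
  · subst hj; simp
  · rw [Function.update_of_ne hj]
    unfold wpt
    have : j.val ≠ k.val := fun h => hj (Fin.ext h)
    have e : (j < k) ↔ (j.val < k.val + 1) := by rw [Fin.lt_def]; omega
    simp only [e]

lemma wpt_self {K N : ℕ} (x xp : Fin K → Fin N → ℝ) (k : Fin K) :
    Function.update (wpt x xp k) k (x k) = fun j => if j.val < k.val then xp j else x j := by
  have : x k = wpt x xp k k := by simp [wpt]
  rw [this, Function.update_eq_self]
  rfl

open Matrix in
lemma descent {K M N : ℕ} (A : Fin K → Matrix (Fin M) (Fin N) ℝ)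
    (b : Fin M → ℝ) (h : Fin K → (Fin N → ℝ) → ℝ) (X : Fin K → Set (Fin N → ℝ))
    (hXcv : ∀ k, Convex ℝ (X k)) (hhcv : ∀ k, ConvexOn ℝ Set.univ (h k))
    (x xp : Fin K → Fin N → ℝ) (hx : ∀ k, x k ∈ X k) (hs : BCDStep A b h X x xp) :
    (1 / 2) * ∑ k, sqnorm ((A k).mulVec (xp k - x k)) ≤ fq A b h x - fq A b h xp := by
  set W : ℕ → Fin K → Fin N → ℝ := fun i j => if j.val < i then xp j else x j with hW
  have h0 : W 0 = x := by funext j; simp [hW]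
  have hKK : W K = xp := by funext j; simp [hW]
  have tel : fq A b h x - fq A b h xp = ∑ k : Fin K, (fq A b h (W k) - fq A b h (W (k + 1))) := by
    rw [Fin.sum_univ_eq_sum_range (fun i => fq A b h (W i) - fq A b h (W (i + 1))) K,
      Finset.sum_range_sub' (fun i => fq A b h (W i)), h0, hKK]
  rw [tel, Finset.mul_sum]
  apply Finset.sum_le_sum
  intro k _
  have h1 := block_VI A b h (wpt x xp k) k (X k) (hXcv k) (hhcv k) (xp k) (hs k).1 (hs k).2
    (x k) (hx k)
  have h2 := fq_update A b h (wpt x xp k) k (x k) (xp k)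
  have h3 : sqnorm ((A k).mulVec (xp k - x k)) = sqnorm ((A k).mulVec (x k - xp k)) := by
    have : xp k - x k = (-1 : ℝ) • (x k - xp k) := by module
    rw [this, Matrix.mulVec_smul, sqnorm_smul']; ring
  rw [h3]
  have e1 : W k = Function.update (wpt x xp k) k (x k) := (wpt_self x xp k).symm
  have e2 : W (k + 1) = Function.update (wpt x xp k) k (xp k) := (wpt_eq_update x xp k).symm
  rw [e1, e2]
  linarith

open Matrix in
lemma costgo {K M N : ℕ} (A : Fin K → Matrix (Fin M) (Fin N) ℝ)
    (b : Fin M → ℝ) (h : Fin K → (Fin N → ℝ) → ℝ) (X : Fin K → Set (Fin N → ℝ))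
    (hXcv : ∀ k, Convex ℝ (X k)) (hhcv : ∀ k, ConvexOn ℝ Set.univ (h k))
    (x xp xs : Fin K → Fin N → ℝ) (hxs : ∀ k, xs k ∈ X k) (hs : BCDStep A b h X x xp) :
    fq A b h xp - fq A b h xs ≤
      ∑ i, ∑ j, (if i < j then (A i).mulVec (xp i - xs i) ⬝ᵥ (A j).mulVec (xp j - x j) else 0) := by
  have hres : resid A b xs = resid A b xp - ∑ k, (A k).mulVec (xp k - xs k) := by
    unfold resid
    simp only [Matrix.mulVec_sub, Finset.sum_sub_distrib]; abel
  have hresk : ∀ k, resid A b (Function.update (wpt x xp k) k (xp k)) =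
      resid A b xp - ∑ j, (if k < j then (A j).mulVec (xp j - x j) else 0) := by
    intro k
    have : ∀ j, (A j).mulVec (Function.update (wpt x xp k) k (xp k) j) =
        (A j).mulVec (xp j) - (if k < j then (A j).mulVec (xp j - x j) else 0) := by
      intro j
      rw [wpt_eq_update]
      by_cases hj : k < j
      · have : ¬ (j.val < k.val + 1) := by rw [Fin.lt_def] at hj; omega
        simp [hj, this, Matrix.mulVec_sub]
      · have : (j.val < k.val + 1) := by rw [Fin.lt_def] at hj; omega
        simp [hj, this]
    unfold resid
    simp only [this, Finset.sum_sub_distrib]; abel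
  have h1 : ∀ k, (h k (xp k) - h k (xs k)) ≤
      resid A b xp ⬝ᵥ (A k).mulVec (xs k - xp k) +
      ∑ j, (if k < j then (A k).mulVec (xp k - xs k) ⬝ᵥ (A j).mulVec (xp j - x j) else 0) := by
    intro k
    have := block_VI A b h (wpt x xp k) k (X k) (hXcv k) (hhcv k) (xp k) (hs k).1 (hs k).2
      (xs k) (hxs k)
    rw [hresk, sub_dotProduct, sum_dotProduct] at this
    have e : ∑ j, (if k < j then (A k).mulVec (xp k - xs k) ⬝ᵥ (A j).mulVec (xp j - x j) else 0)
        = - ∑ j, (if k < j then (A j).mulVec (xp j - x j) else 0) ⬝ᵥ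
            (A k).mulVec (xs k - xp k) := by
      rw [← Finset.sum_neg_distrib]
      apply Finset.sum_congr rfl; intro j _
      split_ifs
      · rw [← neg_sub (xp k) (xs k), Matrix.mulVec_neg, dotProduct_neg, neg_neg, dotProduct_comm]
      · simp
    rw [e]; linarith
  have h2 := Finset.sum_le_sum (fun k (_ : k ∈ Finset.univ) => h1 k)
  rw [Finset.sum_add_distrib, Finset.sum_sub_distrib, ← dotProduct_sum] at h2
  have e2 : ∑ k, (A k).mulVec (xs k - xp k) = - ∑ k, (A k).mulVec (xp k - xs k) := by
    rw [← Finset.sum_neg_distrib]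
    apply Finset.sum_congr rfl; intro k _
    rw [← Matrix.mulVec_neg, neg_sub]
  rw [e2, dotProduct_neg] at h2
  unfold fq gq
  rw [hres, sqnorm_sub']
  have := sqnorm_nonneg' (∑ k, (A k).mulVec (xp k - xs k))
  linarith

lemma log_bound {K N : ℕ} (hK : 1 ≤ K) (hN : 1 ≤ N) :
    ∃ m : ℕ, K ≤ 2 ^ m ∧ (m : ℝ) / 2 ≤ Real.log (2 * (N : ℝ) * (K : ℝ)) := by
  refine ⟨Nat.clog 2 K, Nat.le_pow_clog (by norm_num) K, ?_⟩
  have h1 : 2 ^ (Nat.clog 2 K) ≤ 2 * N * K := by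
    have h2 : 2 ^ (Nat.clog 2 K) ≤ 2 * K := by
      rcases Nat.eq_or_lt_of_le hK with h | h
      · rw [← h]; simp
      · have h3 := Nat.pow_pred_clog_lt_self (b := 2) (by norm_num) h
        have h4 : 0 < Nat.clog 2 K := Nat.clog_pos (by norm_num) h
        obtain ⟨n, hn⟩ := Nat.exists_eq_succ_of_ne_zero h4.ne'
        rw [hn] at h3 ⊢
        simp only [Nat.pred_succ, Nat.succ_eq_add_one] at h3 ⊢
        rw [pow_succ]; omega
    calc _ ≤ 2 * K := h2
      _ ≤ 2 * N * K := Nat.mul_le_mul_right _ (by omega)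
  have h2 : ((2 : ℝ) ^ (Nat.clog 2 K)) ≤ 2 * (N : ℝ) * (K : ℝ) := by exact_mod_cast h1
  have h3 := Real.log_le_log (by positivity) h2
  rw [Real.log_pow] at h3
  have := Real.log_two_gt_d9
  have h5 : (0 : ℝ) ≤ (Nat.clog 2 K : ℝ) := Nat.cast_nonneg _
  nlinarith

lemma rate (D : ℕ → ℝ) (C : ℝ) (hD : ∀ r, 0 ≤ D r) (h0 : D 0 ≤ C) 
    (hrec : ∀ r, D (r + 1) ^ 2 ≤ C * (D r - D (r + 1))) (hmono : ∀ r, D (r + 1) ≤ D r) (r : ℕ) :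
    D (r + 1) ≤ 3 * C / (r + 1) := by
  have hC : 0 ≤ C := (hD 0).trans h0
  induction r with
  | zero => simp; linarith [hmono 0]
  | succ r ih =>
    have hr : (0 : ℝ) ≤ r := Nat.cast_nonneg r
    rw [le_div_iff₀ (by positivity)] at ih ⊢
    push_cast
    by_contra hcon
    push Not at hcon
    have h1 := hrec (r + 1)
    have hpos : 0 < D (r + 1 + 1) := by
      by_contra hn
      have : D (r + 1 + 1) * (r + 1 + 1) ≤ 0 :=
        mul_nonpos_of_nonpos_of_nonneg (not_lt.mp hn) (by positivity)
      linarith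
    set y := D (r + 1 + 1)
    set z := D (r + 1)
    -- y^2 (r+1) ≤ C (z (r+1) - y (r+1)) ≤ C (3C - y (r+1)) < C * y
    have h2 : y ^ 2 * (r + 1) ≤ C * (3 * C - y * (r + 1)) := by
      calc y ^ 2 * (r + 1) ≤ (C * (z - y)) * (r + 1) := by gcongr
        _ = C * (z * (r + 1) - y * (r + 1)) := by ring
        _ ≤ _ := by gcongr
    have h3 : C * (3 * C - y * (r + 1)) ≤ C * y := by
      apply mul_le_mul_of_nonneg_left _ hC; linarith
    have h4 : y * (y * (r + 1)) ≤ y * C := by linarith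
    have h5 : y * (r + 1) ≤ C := le_of_mul_le_mul_left h4 hpos
    have h6 : y ≤ C := by nlinarith
    linarith

/-- Theorem 2, case 1: iteration complexity of cyclic exact BCD
when each `A_k` has full column rank with `λ_min(A_kᵀA_k) ≥ σ_k²`. -/
theorem bcd_rate_col_rank {K M N : ℕ} (hK : 1 ≤ K) (hM : 1 ≤ M) (hN : 1 ≤ N)
    (hNK : 3 ≤ N * K)
    (A : Fin K → Matrix (Fin M) (Fin N) ℝ) (b : Fin M → ℝ)
    (σ : Fin K → ℝ) (hσ : ∀ k, 0 < σ k) (hrank : ∀ k, σ k ^ 2 ≤ lamMinQ (A k))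
    (X : Fin K → Set (Fin N → ℝ)) (h : Fin K → (Fin N → ℝ) → ℝ)
    (hXne : ∀ k, (X k).Nonempty) (hXcl : ∀ k, IsClosed (X k))
    (hXcv : ∀ k, Convex ℝ (X k))
    (hhcv : ∀ k, ConvexOn ℝ Set.univ (h k))
    (hhlsc : ∀ k, LowerSemicontinuous (h k))
    (x : ℕ → Fin K → Fin N → ℝ) (hx0 : ∀ k, x 0 k ∈ X k)
    (hstep : ∀ r : ℕ, BCDStep A b h X (x r) (x (r + 1)))
    (xstar : Fin K → Fin N → ℝ) (hxstarX : ∀ k, xstar k ∈ X k)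
    (hxstar : ∀ y : Fin K → Fin N → ℝ, (∀ k, y k ∈ X k) → fq A b h xstar ≤ fq A b h y)
    (R0 : ℝ)
    (hR0 : ∀ z : Fin K → Fin N → ℝ, (∀ k, z k ∈ X k) → fq A b h z ≤ fq A b h (x 0) →
      ∀ y : Fin K → Fin N → ℝ, (∀ k, y k ∈ X k) →
        (∀ z' : Fin K → Fin N → ℝ, (∀ k, z' k ∈ X k) → fq A b h y ≤ fq A b h z') →
        Real.sqrt (∑ k, sqnorm (z k - y k)) ≤ R0)
    (r : ℕ) :
    fq A b h (x (r + 1)) - fq A b h xstar ≤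
      3 * max (fq A b h (x 0) - fq A b h xstar)
          (2 * R0 ^ 2 * (1 / minOf hK σ ^ 2) * Real.log (2 * (N : ℝ) * (K : ℝ)) ^ 2 *
            (lamMaxBlock A ^ 2 + maxOf hK (fun k => lamMaxQ (A k)) ^ 2)) /
        (r + 1) := by
  obtain ⟨m, hm, hmlog⟩ := log_bound hK hN
  set ℓ := Real.log (2 * (N : ℝ) * (K : ℝ)) with hℓ
  set L := lamMaxBlock A with hLdef
  set s := minOf hK σ with hsdef
  have hL : 0 ≤ L := lamMaxBlock_nonneg A
  have hℓ0 : 0 ≤ ℓ := le_trans (by positivity) hmlog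
  have hspos : 0 < s := by
    rw [hsdef, minOf, Finset.lt_inf'_iff]; intro k _; exact hσ k
  have hsle : ∀ k, s ≤ σ k := fun k => Finset.inf'_le _ (Finset.mem_univ k)
  have hfeas : ∀ r k, x r k ∈ X k := by
    intro r; cases r with
    | zero => exact hx0
    | succ r => exact fun k => (hstep r k).1
  have hdesc : ∀ r, s ^ 2 / 2 * ∑ k, sqnorm (x (r + 1) k - x r k) ≤
      fq A b h (x r) - fq A b h (x (r + 1)) := by
    intro r
    refine le_trans ?_ (descent A b h X hXcv hhcv (x r) (x (r + 1)) (hfeas r) (hstep r))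
    rw [Finset.mul_sum, Finset.mul_sum]
    apply Finset.sum_le_sum; intro k _
    have h1 := lamMin_bound (A k) (x (r + 1) k - x r k)
    have h2 : s ^ 2 ≤ lamMinQ (A k) :=
      (pow_le_pow_left₀ hspos.le (hsle k) 2).trans (hrank k)
    have h3 := mul_le_mul_of_nonneg_right h2 (sqnorm_nonneg' (x (r + 1) k - x r k))
    linarith
  have hsum0 : ∀ r, 0 ≤ ∑ k, sqnorm (x (r + 1) k - x r k) := fun r =>
    Finset.sum_nonneg fun _ _ => sqnorm_nonneg' _
  have hmono : ∀ r, fq A b h (x (r + 1)) ≤ fq A b h (x r) := by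
    intro r
    have := hdesc r
    have h2 : 0 ≤ s ^ 2 / 2 * ∑ k, sqnorm (x (r + 1) k - x r k) :=
      mul_nonneg (by positivity) (hsum0 r)
    linarith
  have hle0 : ∀ r, fq A b h (x r) ≤ fq A b h (x 0) := by
    intro r; induction r with
    | zero => exact le_rfl
    | succ r ih => exact (hmono r).trans ih
  set C0 := 2 * R0 ^ 2 * (1 / s ^ 2) * ℓ ^ 2 *
            (L ^ 2 + maxOf hK (fun k => lamMaxQ (A k)) ^ 2) with hC0
  apply rate (fun r => fq A b h (x r) - fq A b h xstar)
  · intro r; have := hxstar (x r) (hfeas r); linarith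
  · exact le_max_left _ _
  · intro r
    have hΔ : 0 ≤ fq A b h (x (r + 1)) - fq A b h xstar := by
      have := hxstar (x (r + 1)) (hfeas _); linarith
    have hcg := costgo A b h X hXcv hhcv (x r) (x (r + 1)) xstar hxstarX (hstep r)
    have hub := upper_bound A (fun k => x (r + 1) k - xstar k)
      (fun k => x (r + 1) k - x r k) m hm
    have hR : ∑ k, sqnorm (x (r + 1) k - xstar k) ≤ R0 ^ 2 := by
      have h1 := hR0 (x (r + 1)) (hfeas _) (hle0 _) xstar hxstarX hxstar
      exact (Real.sqrt_le_left ((Real.sqrt_nonneg _).trans h1)).mp h1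
    have hmL : (m / 2 * L) ^ 2 ≤ ℓ ^ 2 * L ^ 2 := by
      rw [mul_pow]; gcongr
    have hd := hdesc r
    set e := ∑ k, sqnorm (x (r + 1) k - x r k)
    have he : 0 ≤ e := hsum0 r
    set δ := fq A b h (x r) - fq A b h (x (r + 1)) with hδ
    have hδ0 : 0 ≤ δ := by have := hmono r; linarith
    have hes : e ≤ 2 * (1 / s ^ 2) * δ := by
      have : e = 2 * (1 / s ^ 2) * (s ^ 2 / 2 * e) := by field_simp
      rw [this]; gcongr
    have e1 : fq A b h (x r) - fq A b h xstar - (fq A b h (x (r + 1)) - fq A b h xstar) = δ := by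
      rw [hδ]; ring
    rw [e1]
    calc (fq A b h (x (r + 1)) - fq A b h xstar) ^ 2 ≤ _ := pow_le_pow_left₀ hΔ hcg 2
      _ ≤ _ := hub
      _ ≤ (ℓ ^ 2 * L ^ 2) * (R0 ^ 2 * (2 * (1 / s ^ 2) * δ)) := by
          have : 0 ≤ (∑ k, sqnorm (x (r + 1) k - xstar k)) * e :=
            mul_nonneg (Finset.sum_nonneg fun _ _ => sqnorm_nonneg' _) he
          gcongr
      _ = (2 * R0 ^ 2 * (1 / s ^ 2) * ℓ ^ 2 * L ^ 2) * δ := by ring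
      _ ≤ C0 * δ := by
          gcongr
          rw [hC0]
          gcongr
          linarith [sq_nonneg (maxOf hK (fun k => lamMaxQ (A k)))]
      _ ≤ _ := by gcongr; exact le_max_right _ _
  · intro r; have := hmono r; linarith
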